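/- Let n ≥ 2 and let G = S_n(a_1, a_2, …, a_n) be a palm (a_i ≥ 1 for all i). Then ⌈log_3(n/4)⌉ + 3 ≤ χ_L(G) ≤ n + 1. -/

import Mathlib

open SimpleGraph

/-- Distance from a vertex to a set of vertices, `d(u,S) = min {d(u,v) : v ∈ S}`. -/
noncomputable def distToSet {V : Type*} (G : SimpleGraph V) (u : V) (S : Set V) : ℕ :=
  sInf (G.dist u '' S)

/-- `c` is a locating coloring of `G` with `k` colors: a proper coloring such that any two
distinct vertices are resolved by some color class. -/
def IsLocatingColoring {V : Type*} (G : SimpleGraph V) {k : ℕ} (c : V → Fin k) : Prop :=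
  (∀ u v : V, G.Adj u v → c u ≠ c v) ∧
  ∀ u v : V, u ≠ v →
    ∃ i : Fin k, distToSet G u (c ⁻¹' {i}) ≠ distToSet G v (c ⁻¹' {i})

/-- The locating chromatic number `χ_L(G)`: the least `k` admitting a locating `k`-coloring. -/
noncomputable def locatingChromaticNumber {V : Type*} (G : SimpleGraph V) : ℕ :=
  sInf {k : ℕ | ∃ c : V → Fin k, IsLocatingColoring G c}

/-- The vertex set of the palm `S_n(a_1, …, a_n)`: a hub `none` and, for each leg
`i : Fin n` (representing leg `i+1`), vertices `j : Fin (a (i+1))`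
(vertex `some ⟨i, j⟩` represents `a_{i+1, j+1}`). -/
def PalmVert (n : ℕ) (a : ℕ → ℕ) : Type :=
  Option ((i : Fin n) × Fin (a ((i : ℕ) + 1)))

/-- The palm `S_n(a_1, …, a_n)`: the star `K_{1,n}` whose `i`-th edge has been subdivided
`a_i - 1` times; the hub is joined to the first vertex of each leg, and consecutive
vertices along a leg are adjacent. -/
def Palm (n : ℕ) (a : ℕ → ℕ) : SimpleGraph (PalmVert n a) :=
  SimpleGraph.fromRel fun u v =>
    match u, v with
    | none, some ⟨_, j⟩ => (j : ℕ) = 0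
    | some ⟨i, j⟩, some ⟨i', j'⟩ => (i : ℕ) = (i' : ℕ) ∧ (j' : ℕ) = (j : ℕ) + 1
    | _, _ => False

/-!
Lower bound: the neighbors of a vertex `x` of one color `i` have pairwise different color codes. The
code of such a neighbor is `0` at `i`, `1` at the color of `x`, `1` or `2` at every other color
found around `x`, and within `1` of the code of `x` at the remaining colors. If `t` colors are found
around `x`, this leaves at most `2 ^ (t - 1) * 3 ^ (k - t - 1)` neighbors of each of them, and
`t * 2 ^ (t - 1) * 3 ^ (k - t - 1)` is largest at `t = 2` and `t = 3`, with value `4 * 3 ^ (k - 3)`.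

Upper bound: on each leg, the vertices at odd distance from the hub get the color of that leg, and
all remaining vertices share one further color. A vertex outside leg `l` at distance `d` from the
hub is at distance `d + 1` from the color of leg `l`, while the vertices of leg `l` are at distance
at most `1` from it.
-/

section DistToSet

variable {V : Type*} {G : SimpleGraph V} {u v : V} {S : Set V}

lemma distToSet_le_dist (hv : v ∈ S) : distToSet G u S ≤ G.dist u v :=
  Nat.sInf_le ⟨v, hv, rfl⟩

lemma exists_dist_eq_distToSet (G : SimpleGraph V) (u : V) (hS : S.Nonempty) :
    ∃ v ∈ S, G.dist u v = distToSet G u S :=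
  Nat.sInf_mem (hS.image (G.dist u))

lemma distToSet_eq_zero_of_mem (hu : u ∈ S) : distToSet G u S = 0 := by
  simpa using distToSet_le_dist (G := G) (u := u) hu

lemma distToSet_pos (hG : G.Connected) (hS : S.Nonempty) (hu : u ∉ S) : 0 < distToSet G u S := by
  obtain ⟨v, hv, hdist⟩ := exists_dist_eq_distToSet G u hS
  rw [← hdist]
  exact hG.pos_dist_of_ne (ne_of_mem_of_not_mem hv hu).symm

lemma distToSet_le_dist_add_distToSet (hG : G.Connected) (u v : V) (S : Set V) :
    distToSet G u S ≤ G.dist u v + distToSet G v S := by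
  rcases S.eq_empty_or_nonempty with rfl | hS
  · simp [distToSet]
  obtain ⟨w, hw, hdist⟩ := exists_dist_eq_distToSet G v hS
  calc distToSet G u S ≤ G.dist u w := distToSet_le_dist hw
    _ ≤ G.dist u v + G.dist v w := hG.dist_triangle
    _ = G.dist u v + distToSet G v S := by rw [hdist]

lemma le_add_dist_of_forall_adj (hG : G.Connected) {f : V → ℤ}
    (hf : ∀ u v, G.Adj u v → f u ≤ f v + 1) (u v : V) : f u ≤ f v + G.dist u v := by
  obtain ⟨w, hw⟩ := hG.exists_walk_length_eq_dist u v
  rw [← hw]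
  clear hw
  induction w with
  | nil => simp
  | cons hadj w ih =>
    have := hf _ _ hadj
    rw [Walk.length_cons]
    omega

lemma le_add_distToSet_of_forall_adj (hG : G.Connected) {f : V → ℤ}
    (hf : ∀ u v, G.Adj u v → f u ≤ f v + 1) (hS : S.Nonempty) {m : ℤ} (hm : ∀ v ∈ S, f v ≤ m)
    (u : V) : f u ≤ m + distToSet G u S := by
  obtain ⟨v, hv, hdist⟩ := exists_dist_eq_distToSet G u hS
  rw [← hdist]
  exact (le_add_dist_of_forall_adj hG hf u v).trans (by gcongr; exact hm v hv)

end DistToSet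

section ColorCode

variable {V α : Type*} {G : SimpleGraph V} {c : V → α} {u v x : V}

/-- The color code of a vertex: its distances to the color classes, as a function of the color. A
proper coloring is locating when color codes tell the vertices apart. -/
noncomputable def colorCode (G : SimpleGraph V) (c : V → α) (u : V) (i : α) : ℕ :=
  distToSet G u (c ⁻¹' {i})

lemma isLocatingColoring_iff_injective_colorCode {k : ℕ} {c : V → Fin k} :
    IsLocatingColoring G c ↔
      (∀ u v, G.Adj u v → c u ≠ c v) ∧ Function.Injective (colorCode G c) := by
  refine and_congr_right fun _ => forall₂_congr fun u v => ?_
  rw [← Function.ne_iff, not_imp_not]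
  rfl

lemma colorCode_self (G : SimpleGraph V) (c : V → α) (u : V) : colorCode G c u (c u) = 0 :=
  distToSet_eq_zero_of_mem rfl

lemma colorCode_le_dist (G : SimpleGraph V) (c : V → α) (u v : V) :
    colorCode G c u (c v) ≤ G.dist u v :=
  distToSet_le_dist rfl

lemma colorCode_pos (hG : G.Connected) (hne : c u ≠ c v) : 0 < colorCode G c u (c v) :=
  distToSet_pos hG ⟨v, rfl⟩ hne

lemma colorCode_eq_one_of_adj (hG : G.Connected) (hadj : G.Adj u v) (hne : c u ≠ c v) :
    colorCode G c u (c v) = 1 :=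
  le_antisymm ((colorCode_le_dist G c u v).trans_eq (dist_eq_one_iff_adj.2 hadj))
    (colorCode_pos hG hne)

lemma colorCode_mem_Icc_one_two (hG : G.Connected) (hu : G.Adj x u) (hv : G.Adj x v)
    (hne : c u ≠ c v) : colorCode G c u (c v) ∈ Finset.Icc 1 2 := by
  refine Finset.mem_Icc.2 ⟨colorCode_pos hG hne, ?_⟩
  calc colorCode G c u (c v) ≤ G.dist u v := colorCode_le_dist G c u v
    _ ≤ G.dist u x + G.dist x v := hG.dist_triangle
    _ = 2 := by rw [dist_eq_one_iff_adj.2 hu.symm, dist_eq_one_iff_adj.2 hv]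

lemma colorCode_mem_Icc_of_adj (hG : G.Connected) (hadj : G.Adj x u) (i : α) :
    colorCode G c u i ∈ Finset.Icc (colorCode G c x i - 1) (colorCode G c x i + 1) := by
  have hux := distToSet_le_dist_add_distToSet hG u x (c ⁻¹' {i})
  have hxu := distToSet_le_dist_add_distToSet hG x u (c ⁻¹' {i})
  rw [dist_eq_one_iff_adj.2 hadj.symm] at hux
  rw [dist_eq_one_iff_adj.2 hadj] at hxu
  rw [Finset.mem_Icc, colorCode, colorCode]
  omega

end ColorCode

section LowerBound

open scoped Finset

lemma card_le_prod_card_image {ι α β : Type*} [Fintype ι] [DecidableEq β] {s : Finset α}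
    {f : α → ι → β} (hf : Set.InjOn f s) : #s ≤ ∏ j, #(s.image fun y => f y j) := by
  classical
  rw [← Fintype.card_piFinset]
  exact Finset.card_le_card_of_injOn f
    (fun y hy => Fintype.mem_piFinset.2 fun _ => Finset.mem_image_of_mem _ hy) hf

lemma three_mul_succ_mul_two_pow_le : ∀ t : ℕ, 3 * ((t + 1) * 2 ^ t) ≤ 4 * 3 ^ t
  | 0 => by norm_num
  | 1 => by norm_num
  | t + 2 =>
    calc 3 * ((t + 3) * 2 ^ (t + 2)) = 2 * (t + 3) * (3 * 2 ^ (t + 1)) := by ring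
      _ ≤ 3 * (t + 2) * (3 * 2 ^ (t + 1)) := by gcongr ?_ * _; omega
      _ = 3 * (3 * ((t + 2) * 2 ^ (t + 1))) := by ring
      _ ≤ 3 * (4 * 3 ^ (t + 1)) := Nat.mul_le_mul_left 3 (three_mul_succ_mul_two_pow_le (t + 1))
      _ = 4 * 3 ^ (t + 2) := by ring

variable {V : Type*} {G : SimpleGraph V} {k : ℕ} {c : V → Fin k} {x : V} {s : Finset V}

lemma card_image_colorCode_le (hG : G.Connected) (hc : ∀ u v, G.Adj u v → c u ≠ c v)
    (hs : ∀ y ∈ s, G.Adj x y) (i j : Fin k) :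
    #({y ∈ s | c y = i}.image fun y => colorCode G c y j) ≤
      (if j ∈ (s.image c).erase i then 2 else 1) *
        (if j ∈ (insert (c x) (s.image c))ᶜ then 3 else 1) := by
  have card_le_of_forall_mem {R : Finset ℕ} (hR : ∀ y ∈ s, c y = i → colorCode G c y j ∈ R) :
      #({y ∈ s | c y = i}.image fun y => colorCode G c y j) ≤ #R :=
    Finset.card_le_card (Finset.image_subset_iff.2 (by simpa using hR))
  obtain rfl | hji := eq_or_ne j i
  · refine (card_le_of_forall_mem (R := {0}) ?_).trans (by split_ifs <;> simp)
    rintro y - rfl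
    simp [colorCode_self]
  obtain rfl | hjx := eq_or_ne j (c x)
  · refine (card_le_of_forall_mem (R := {1}) ?_).trans (by split_ifs <;> simp)
    intro y hy _
    simp [colorCode_eq_one_of_adj hG (hs y hy).symm (hc x y (hs y hy)).symm]
  by_cases hj : j ∈ s.image c
  · refine (card_le_of_forall_mem (R := Finset.Icc 1 2) ?_).trans (by simp [hj, hji])
    rintro y hy rfl
    obtain ⟨z, hz, rfl⟩ := Finset.mem_image.1 hj
    exact colorCode_mem_Icc_one_two hG (hs y hy) (hs z hz) hji.symm
  · refine (card_le_of_forall_mem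
      fun y hy _ => colorCode_mem_Icc_of_adj hG (hs y hy) j).trans ?_
    rw [if_neg (mt Finset.mem_of_mem_erase hj), if_pos (by simp [hj, hjx]), Nat.card_Icc]
    omega

namespace IsLocatingColoring

lemma card_neighbors_filter_color_le (hG : G.Connected) (hc : IsLocatingColoring G c)
    (hs : ∀ y ∈ s, G.Adj x y) (i : Fin k) :
    #{y ∈ s | c y = i} ≤
      2 ^ #((s.image c).erase i) * 3 ^ #(insert (c x) (s.image c))ᶜ := by
  obtain ⟨hproper, hinj⟩ := isLocatingColoring_iff_injective_colorCode.1 hc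
  calc #{y ∈ s | c y = i}
      ≤ ∏ j, #({y ∈ s | c y = i}.image fun y => colorCode G c y j) :=
        card_le_prod_card_image hinj.injOn
    _ ≤ ∏ j, (if j ∈ (s.image c).erase i then 2 else 1) *
          (if j ∈ (insert (c x) (s.image c))ᶜ then 3 else 1) :=
        Finset.prod_le_prod' fun j _ => card_image_colorCode_le hG hproper hs i j
    _ = 2 ^ #((s.image c).erase i) * 3 ^ #(insert (c x) (s.image c))ᶜ := by
        simp only [Finset.prod_mul_distrib, Finset.prod_ite_mem, Finset.univ_inter,
          Finset.prod_const]

theorem card_neighbors_le (hG : G.Connected) (hc : IsLocatingColoring G c)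
    (hs : ∀ y ∈ s, G.Adj x y) : 27 * #s ≤ 4 * 3 ^ k := by
  obtain rfl | hne := s.eq_empty_or_nonempty
  · simp
  obtain ⟨t, ht⟩ : ∃ t, #(s.image c) = t + 1 :=
    Nat.exists_eq_succ_of_ne_zero (hne.image c).card_pos.ne'
  obtain ⟨m, hm⟩ : ∃ m, #(insert (c x) (s.image c))ᶜ = m := ⟨_, rfl⟩
  have hk : t + 2 + m = k := by
    have hx : c x ∉ s.image c := fun h => by
      obtain ⟨y, hy, hyx⟩ := Finset.mem_image.1 h
      exact hc.1 x y (hs y hy) hyx.symm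
    have hcompl := Finset.card_add_card_compl (insert (c x) (s.image c))
    rwa [Finset.card_insert_of_notMem hx, ht, hm, Fintype.card_fin] at hcompl
  have hcard : #s ≤ 2 ^ t * 3 ^ m * (t + 1) := by
    rw [← ht]
    refine Finset.card_le_mul_card_image s _ fun i hi => ?_
    have hfiber := card_neighbors_filter_color_le hG hc hs i
    rwa [Finset.card_erase_of_mem hi, ht, Nat.add_sub_cancel, hm] at hfiber
  calc 27 * #s ≤ 27 * (2 ^ t * 3 ^ m * (t + 1)) := by gcongr
    _ = 3 * ((t + 1) * 2 ^ t) * (9 * 3 ^ m) := by ring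
    _ ≤ 4 * 3 ^ t * (9 * 3 ^ m) := Nat.mul_le_mul_right _ (three_mul_succ_mul_two_pow_le t)
    _ = 4 * 3 ^ k := by rw [← hk]; ring

lemma ceil_logb_add_three_le (hG : G.Connected) (hc : IsLocatingColoring G c)
    (hs : ∀ y ∈ s, G.Adj x y) (hne : s.Nonempty) : ⌈Real.logb 3 ((#s : ℝ) / 4)⌉ + 3 ≤ (k : ℤ) := by
  have hpos : (0 : ℝ) < #s := mod_cast hne.card_pos
  have hcard : (27 * #s : ℝ) ≤ 4 * 3 ^ k := mod_cast card_neighbors_le hG hc hs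
  rw [← le_sub_iff_add_le, Int.ceil_le,
    Real.logb_le_iff_le_rpow (by norm_num) (div_pos hpos four_pos)]
  calc (#s : ℝ) / 4 ≤ 3 ^ k / 27 := by linarith
    _ = (3 : ℝ) ^ (((k : ℤ) - 3 : ℤ) : ℝ) := by
      rw [Real.rpow_intCast, zpow_sub₀ three_ne_zero, zpow_natCast]
      norm_num

lemma locatingChromaticNumber_le (hc : IsLocatingColoring G c) : locatingChromaticNumber G ≤ k :=
  Nat.sInf_le ⟨c, hc⟩

lemma exists_isLocatingColoring_locatingChromaticNumber (hc : IsLocatingColoring G c) :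
    ∃ c' : V → Fin (locatingChromaticNumber G), IsLocatingColoring G c' :=
  Nat.sInf_mem (s := {k | ∃ c : V → Fin k, IsLocatingColoring G c}) ⟨k, c, hc⟩

theorem ceil_logb_add_three_le_locatingChromaticNumber (hG : G.Connected)
    (hc : IsLocatingColoring G c) (hs : ∀ y ∈ s, G.Adj x y) (hne : s.Nonempty) :
    ⌈Real.logb 3 ((#s : ℝ) / 4)⌉ + 3 ≤ (locatingChromaticNumber G : ℤ) := by
  obtain ⟨c', hc'⟩ := hc.exists_isLocatingColoring_locatingChromaticNumber
  exact ceil_logb_add_three_le hG hc' hs hne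

end IsLocatingColoring

end LowerBound

namespace PalmVert

variable {n : ℕ} {a : ℕ → ℕ}

/-- The hub `a_0` of the palm. -/
def hub : PalmVert n a := none

/-- The vertices of leg `i`; `leg i j` is at distance `j + 1` from the hub. -/
def leg (i : Fin n) (j : Fin (a (i + 1))) : PalmVert n a := some ⟨i, j⟩

@[elab_as_elim]
lemma hub_leg_cases {motive : PalmVert n a → Prop} (hub : motive hub)
    (leg : ∀ i j, motive (leg i j)) : ∀ v, motive v
  | none => hub
  | some ⟨i, j⟩ => leg i j

lemma leg_injective (i : Fin n) : Function.Injective (leg (a := a) i) :=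
  (Option.some_injective _).comp sigma_mk_injective

lemma hub_notMem_range_leg (l : Fin n) : (hub : PalmVert n a) ∉ Set.range (leg l) :=
  fun ⟨_, h⟩ => Option.some_ne_none _ h

lemma leg_mem_range_leg_iff {l i : Fin n} {j : Fin (a (i + 1))} :
    leg i j ∈ Set.range (leg l) ↔ i = l := by
  refine ⟨fun ⟨_, h⟩ => (congrArg Sigma.fst (Option.some.inj h)).symm, ?_⟩
  rintro rfl
  exact Set.mem_range_self j

/-- The vertices adjacent to the hub, one on each leg. -/
def firstOfLeg (ha : ∀ i : Fin n, 0 < a (i + 1)) : Fin n ↪ PalmVert n a where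
  toFun i := leg i ⟨0, ha i⟩
  inj' _ _ h := leg_mem_range_leg_iff.1 ⟨_, h.symm⟩

/-- The distance from the hub. -/
def depth : PalmVert n a → ℕ
  | none => 0
  | some ⟨_, j⟩ => j + 1

@[simp] lemma depth_hub : depth (hub : PalmVert n a) = 0 := rfl

@[simp] lemma depth_leg (i : Fin n) (j : Fin (a (i + 1))) : depth (leg i j) = j + 1 := rfl

/-- The depth with the sign changed on leg `l`: the coordinate of a vertex along the path formed by
leg `l` and any other leg. -/
def signedDepth (l : Fin n) : PalmVert n a → ℤ
  | none => 0
  | some ⟨i, j⟩ => if i = l then -(j + 1) else j + 1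

@[simp] lemma signedDepth_hub (l : Fin n) : signedDepth l (hub : PalmVert n a) = 0 := rfl

lemma signedDepth_leg (l i : Fin n) (j : Fin (a (i + 1))) :
    signedDepth l (leg i j) = if i = l then -((j : ℤ) + 1) else (j : ℤ) + 1 := rfl

lemma signedDepth_le_neg_one {l : Fin n} {v : PalmVert n a} (hv : v ∈ Set.range (leg l)) :
    signedDepth l v ≤ -1 := by
  obtain ⟨j, rfl⟩ := hv
  simp [signedDepth_leg]

lemma signedDepth_eq_depth {l : Fin n} {v : PalmVert n a} (hv : v ∉ Set.range (leg l)) :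
    signedDepth l v = depth v := by
  cases v using hub_leg_cases with
  | hub => simp
  | leg i j => simp [signedDepth_leg, mt leg_mem_range_leg_iff.2 hv]

end PalmVert

namespace Palm

open PalmVert

variable {n : ℕ} {a : ℕ → ℕ}

lemma adj_hub_leg {i : Fin n} {j : Fin (a (i + 1))} :
    (Palm n a).Adj hub (leg i j) ↔ (j : ℕ) = 0 := by
  have hne : (hub : PalmVert n a) ≠ leg i j := fun h => hub_notMem_range_leg i ⟨j, h.symm⟩
  simp only [Palm, fromRel_adj, ne_eq, hne, not_false_eq_true, true_and]
  simp [hub, leg]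

lemma adj_leg_leg {i i' : Fin n} {j : Fin (a (i + 1))} {j' : Fin (a (i' + 1))} :
    (Palm n a).Adj (leg i j) (leg i' j') ↔ i = i' ∧ ((j' : ℕ) = j + 1 ∨ (j : ℕ) = j' + 1) := by
  rw [Palm, fromRel_adj]
  constructor
  · rintro ⟨-, h | h⟩
    · exact ⟨Fin.ext h.1, Or.inl h.2⟩
    · exact ⟨Fin.ext h.1.symm, Or.inr h.2⟩
  · rintro ⟨rfl, h⟩
    refine ⟨fun heq => ?_, h.imp (⟨rfl, ·⟩) (⟨rfl, ·⟩)⟩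
    rw [leg_injective i heq] at h
    omega

lemma adj_hub_firstOfLeg (ha : ∀ i : Fin n, 0 < a (i + 1)) (i : Fin n) :
    (Palm n a).Adj hub (firstOfLeg ha i) :=
  adj_hub_leg.2 rfl

@[elab_as_elim]
lemma adj_induction {motive : ∀ u v, (Palm n a).Adj u v → Prop}
    (symm : ∀ u v hadj, motive u v hadj → motive v u hadj.symm)
    (hub_leg : ∀ (i : Fin n) (j : Fin (a (i + 1))) (h : (j : ℕ) = 0),
      motive hub (leg i j) (adj_hub_leg.2 h))
    (leg_leg : ∀ (i : Fin n) (j j' : Fin (a (i + 1))) (h : (j' : ℕ) = j + 1),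
      motive (leg i j) (leg i j') (adj_leg_leg.2 ⟨rfl, Or.inl h⟩))
    {u v : PalmVert n a} (hadj : (Palm n a).Adj u v) : motive u v hadj := by
  cases u using hub_leg_cases with
  | hub =>
    cases v using hub_leg_cases with
    | hub => exact (hadj.ne rfl).elim
    | leg i j => exact hub_leg i j (adj_hub_leg.1 hadj)
  | leg i j =>
    cases v using hub_leg_cases with
    | hub => exact symm _ _ _ (hub_leg i j (adj_hub_leg.1 hadj.symm))
    | leg i' j' =>
      obtain ⟨rfl, h | h⟩ := adj_leg_leg.1 hadj
      · exact leg_leg i j j' h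
      · exact symm _ _ _ (leg_leg i j' j h)

lemma exists_walk_hub_length_eq_depth (v : PalmVert n a) :
    ∃ w : (Palm n a).Walk v hub, w.length = depth v := by
  cases v using hub_leg_cases with
  | hub => exact ⟨.nil, rfl⟩
  | leg i j =>
    obtain ⟨j, hj⟩ := j
    induction j with
    | zero => exact ⟨.cons (adj_hub_leg.2 rfl).symm .nil, rfl⟩
    | succ j ih =>
      obtain ⟨w, hw⟩ := ih (by omega)
      exact ⟨.cons (adj_leg_leg.2 ⟨rfl, Or.inr rfl⟩) w, by simp [hw]⟩

lemma connected (n : ℕ) (a : ℕ → ℕ) : (Palm n a).Connected :=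
  connected_iff_exists_forall_reachable _ |>.2
    ⟨hub, fun v => (exists_walk_hub_length_eq_depth v).choose.reachable.symm⟩

lemma dist_hub_le_depth (v : PalmVert n a) : (Palm n a).dist v hub ≤ depth v := by
  obtain ⟨w, hw⟩ := exists_walk_hub_length_eq_depth v
  exact hw ▸ dist_le w

lemma abs_signedDepth_sub_le_one_of_adj (l : Fin n) {u v : PalmVert n a}
    (hadj : (Palm n a).Adj u v) : |signedDepth l u - signedDepth l v| ≤ 1 := by
  induction hadj using adj_induction with
  | symm u v _ h => rwa [abs_sub_comm]
  | hub_leg i j h =>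
    rw [signedDepth_hub, signedDepth_leg, abs_le]
    split_ifs <;> omega
  | leg_leg i j j' h =>
    rw [signedDepth_leg, signedDepth_leg, abs_le]
    split_ifs <;> omega

/-- The coloring behind the upper bound: leg `i` alternates, starting next to the hub, between its
own color `i` and the color `n` of the hub. -/
def coloring : PalmVert n a → Fin (n + 1)
  | none => Fin.last n
  | some ⟨i, j⟩ => if Even (j : ℕ) then i.castSucc else Fin.last n

lemma coloring_hub : coloring (hub : PalmVert n a) = Fin.last n := rfl

lemma coloring_leg (i : Fin n) (j : Fin (a (i + 1))) :
    coloring (leg i j) = if Even (j : ℕ) then i.castSucc else Fin.last n := rfl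

lemma coloring_firstOfLeg (ha : ∀ i : Fin n, 0 < a (i + 1)) (i : Fin n) :
    coloring (firstOfLeg ha i) = i.castSucc := by
  change coloring (leg i ⟨0, ha i⟩) = i.castSucc
  simp [coloring_leg]

lemma coloring_ne_of_adj {u v : PalmVert n a} (hadj : (Palm n a).Adj u v) :
    coloring u ≠ coloring v := by
  induction hadj using adj_induction with
  | symm u v _ h => exact h.symm
  | hub_leg i j h => simpa [coloring_hub, coloring_leg, h] using (Fin.castSucc_ne_last i).symm
  | leg_leg i j j' h =>
    simp only [coloring_leg, h, Nat.even_add_one, ite_not]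
    by_cases hj : Even (j : ℕ)
    · simpa only [if_pos hj] using Fin.castSucc_ne_last i
    · simpa only [if_neg hj] using (Fin.castSucc_ne_last i).symm

lemma mem_range_leg_of_coloring_eq {l : Fin n} {v : PalmVert n a}
    (hv : coloring v = l.castSucc) : v ∈ Set.range (leg l) := by
  cases v using hub_leg_cases with
  | hub => exact (Fin.castSucc_ne_last l hv.symm).elim
  | leg i j =>
    rw [coloring_leg] at hv
    split_ifs at hv
    · exact leg_mem_range_leg_iff.2 (Fin.castSucc_injective n hv)
    · exact (Fin.castSucc_ne_last l hv.symm).elim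

lemma colorCode_leg_le_one (i : Fin n) (j : Fin (a (i + 1))) :
    colorCode (Palm n a) coloring (leg i j) i.castSucc ≤ 1 := by
  by_cases hj : Even (j : ℕ)
  · have hcol : coloring (leg i j) = i.castSucc := if_pos hj
    rw [← hcol, colorCode_self]
    exact zero_le_one
  · obtain ⟨p, hp⟩ := Nat.not_even_iff_odd.1 hj
    let j' : Fin (a (i + 1)) := ⟨2 * p, by omega⟩
    have hcol : coloring (leg i j') = i.castSucc := if_pos (even_two_mul p)
    have hadj : (Palm n a).Adj (leg i j) (leg i j') := adj_leg_leg.2 ⟨rfl, Or.inr hp⟩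
    rw [← hcol]
    exact (colorCode_le_dist _ _ _ _).trans_eq (dist_eq_one_iff_adj.2 hadj)

lemma colorCode_eq_depth_add_one (ha : ∀ i : Fin n, 0 < a (i + 1)) {l : Fin n}
    {v : PalmVert n a} (hv : v ∉ Set.range (leg l)) :
    colorCode (Palm n a) coloring v l.castSucc = depth v + 1 := by
  apply le_antisymm
  · rw [← coloring_firstOfLeg ha l]
    calc colorCode (Palm n a) coloring v (coloring (firstOfLeg ha l))
        ≤ (Palm n a).dist v (firstOfLeg ha l) := colorCode_le_dist _ _ _ _
      _ ≤ (Palm n a).dist v hub + (Palm n a).dist hub (firstOfLeg ha l) :=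
          (connected n a).dist_triangle
      _ ≤ depth v + 1 :=
          add_le_add (dist_hub_le_depth v) (dist_eq_one_iff_adj.2 (adj_hub_firstOfLeg ha l)).le
  · have hlower := le_add_distToSet_of_forall_adj (connected n a) (f := signedDepth l)
      (S := coloring ⁻¹' {l.castSucc})
      (fun u w hadj => by have := abs_le.1 (abs_signedDepth_sub_le_one_of_adj l hadj); omega)
      ⟨_, coloring_firstOfLeg ha l⟩
      (fun w hw => signedDepth_le_neg_one (mem_range_leg_of_coloring_eq hw)) v
    rw [signedDepth_eq_depth hv] at hlower
    rw [colorCode]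
    omega

lemma depth_eq_of_colorCode_eq (hn : 2 ≤ n) (ha : ∀ i : Fin n, 0 < a (i + 1)) {i : Fin n}
    {u v : PalmVert n a} (hu : ∀ l ≠ i, u ∉ Set.range (leg l))
    (hv : ∀ l ≠ i, v ∉ Set.range (leg l))
    (hcode : colorCode (Palm n a) coloring u = colorCode (Palm n a) coloring v) :
    depth u = depth v := by
  have : Nontrivial (Fin n) := Fin.nontrivial_iff_two_le.2 hn
  obtain ⟨l, hl⟩ := exists_ne i
  have hcode_l := congrFun hcode l.castSucc
  rwa [colorCode_eq_depth_add_one ha (hu l hl), colorCode_eq_depth_add_one ha (hv l hl),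
    Nat.add_right_cancel_iff] at hcode_l

lemma leg_index_eq_of_colorCode_eq (ha : ∀ i : Fin n, 0 < a (i + 1)) {i i' : Fin n}
    {j : Fin (a (i + 1))} {j' : Fin (a (i' + 1))}
    (hcode : colorCode (Palm n a) coloring (leg i j) =
      colorCode (Palm n a) coloring (leg i' j')) : i = i' := by
  by_contra hne
  have hle := colorCode_leg_le_one i j
  rw [hcode, colorCode_eq_depth_add_one ha (mt leg_mem_range_leg_iff.1 (Ne.symm hne)),
    depth_leg] at hle
  omega

lemma injective_colorCode_coloring (hn : 2 ≤ n) (ha : ∀ i : Fin n, 0 < a (i + 1)) :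
    Function.Injective (colorCode (Palm n a) coloring) := by
  have leg_notMem (i : Fin n) (j : Fin (a (i + 1))) (l : Fin n) (hl : l ≠ i) :
      leg i j ∉ Set.range (leg l) := mt leg_mem_range_leg_iff.1 hl.symm
  have hub_ne_leg (i : Fin n) (j : Fin (a (i + 1))) :
      colorCode (Palm n a) coloring hub ≠ colorCode (Palm n a) coloring (leg i j) := by
    intro hcode
    have hdepth := depth_eq_of_colorCode_eq hn ha (fun l _ => hub_notMem_range_leg l)
      (leg_notMem i j) hcode
    simp at hdepth
  intro u v hcode
  cases u using hub_leg_cases with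
  | hub =>
    cases v using hub_leg_cases with
    | hub => rfl
    | leg i j => exact (hub_ne_leg i j hcode).elim
  | leg i j =>
    cases v using hub_leg_cases with
    | hub => exact (hub_ne_leg i j hcode.symm).elim
    | leg i' j' =>
      obtain rfl := leg_index_eq_of_colorCode_eq ha hcode
      have hdepth := depth_eq_of_colorCode_eq hn ha (leg_notMem i j) (leg_notMem i j') hcode
      exact congrArg (leg i) (Fin.ext (Nat.succ_injective hdepth))

theorem isLocatingColoring_coloring (hn : 2 ≤ n) (ha : ∀ i : Fin n, 0 < a (i + 1)) :
    IsLocatingColoring (Palm n a) coloring :=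
  isLocatingColoring_iff_injective_colorCode.2
    ⟨fun _ _ => coloring_ne_of_adj, injective_colorCode_coloring hn ha⟩

end Palm

/-- For `n ≥ 2` and a palm `G = S_n(a_1, …, a_n)` (with all `a_i ≥ 1`),
`⌈log_3(n/4)⌉ + 3 ≤ χ_L(G) ≤ n + 1`. -/
theorem locatingChromaticNumber_palm_bounds (n : ℕ) (hn : 2 ≤ n) (a : ℕ → ℕ)
    (ha : ∀ i, 1 ≤ i → i ≤ n → 1 ≤ a i) :
    ⌈Real.logb 3 ((n : ℝ) / 4)⌉ + 3 ≤ (locatingChromaticNumber (Palm n a) : ℤ) ∧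
      locatingChromaticNumber (Palm n a) ≤ n + 1 := by
  have hpos (i : Fin n) : 0 < a (i + 1) := ha _ (by omega) (by omega)
  have hc := Palm.isLocatingColoring_coloring hn hpos
  have : NeZero n := ⟨by omega⟩
  have hs : ∀ y ∈ Finset.univ.map (PalmVert.firstOfLeg hpos), (Palm n a).Adj PalmVert.hub y := by
    simpa using Palm.adj_hub_firstOfLeg hpos
  refine ⟨?_, hc.locatingChromaticNumber_le⟩
  simpa using hc.ceil_logb_add_three_le_locatingChromaticNumber (Palm.connected n a) hs (by simp)
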